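/- For all information structures u, v on K × ℕ × ℕ: sup_{g∈𝒢}(val(v,g) − val(u,g)) = inf{ ‖u' − v'‖ : u', v' information structures with u' ⪯ u and v' ⪰ v }, where w ⪰ w' means val(w,g) ≥ val(w',g) for every g ∈ 𝒢. -/

import Mathlib

open scoped BigOperators ENNReal

namespace ValueDistance

/-- An information structure: a probability distribution on `K × ℕ × ℕ`
(state, signal of player 1, signal of player 2). -/
abbrev InfoStruct (K : Type) := PMF (K × ℕ × ℕ)

/-- A behavior strategy / garbling : a map `ℕ → Δ(ℕ)`. -/
abbrev Garbling : Type := ℕ → PMF ℕ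

variable {K : Type}

/-- `g` is a payoff function with action bound `L` : values in `[-1,1]`,
`g k i j = -1` when `i ≥ L`, and `g k i j = 1` when `i < L` and `j ≥ L`. -/
def IsPayoffL (L : ℕ) (g : K → ℕ → ℕ → ℝ) : Prop :=
  (∀ k i j, g k i j ∈ Set.Icc (-1 : ℝ) 1) ∧
  (∀ k i j, L ≤ i → g k i j = -1) ∧
  (∀ k i j, i < L → L ≤ j → g k i j = 1)

/-- `g` belongs to the set `𝒢` of payoff functions. -/
def IsPayoff (g : K → ℕ → ℕ → ℝ) : Prop := ∃ L, IsPayoffL L g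

/-- `g` belongs to the set `𝒢₁` of single-agent (player 1) problems. -/
def IsPayoff1 (g : K → ℕ → ℕ → ℝ) : Prop :=
  IsPayoff g ∧ ∀ k i j j', g k i j = g k i j'

/-- Expected payoff in the Bayesian game `Γ(u,g)` when player 1 uses the behavior
strategy `σ` and player 2 uses `τ`. -/
noncomputable def payoff (u : InfoStruct K) (g : K → ℕ → ℕ → ℝ)
    (σ τ : Garbling) : ℝ :=
  ∑' (x : K × ℕ × ℕ) (i : ℕ) (j : ℕ),
    (u x).toReal * (σ x.2.1 i).toReal * (τ x.2.2 j).toReal * g x.1 i j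

/-- The value `val(u,g)` of the zero-sum Bayesian game `Γ(u,g)`
(the common value of `sup inf` and `inf sup` of the expected payoff;
we take `sup inf` as the definition). -/
noncomputable def val (u : InfoStruct K) (g : K → ℕ → ℕ → ℝ) : ℝ :=
  ⨆ σ : Garbling, ⨅ τ : Garbling, payoff u g σ τ

/-- Total variation distance `‖u − v‖`. -/
noncomputable def tv {α : Type} (u v : PMF α) : ℝ :=
  ∑' x : α, |(u x).toReal - (v x).toReal|

/-- `q.u` : player 1's signal garbled through `q`. -/
noncomputable def garbleLeft (q : Garbling) (u : InfoStruct K) : InfoStruct K :=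
  u.bind (fun x => (q x.2.1).map (fun c => (x.1, c, x.2.2)))

/-- `u.q` : player 2's signal garbled through `q`. -/
noncomputable def garbleRight (u : InfoStruct K) (q : Garbling) : InfoStruct K :=
  u.bind (fun x => (q x.2.2).map (fun d => (x.1, x.2.1, d)))

/-- The value-based distance `d(u,v) = sup_{g ∈ 𝒢} |val(u,g) − val(v,g)|`. -/
noncomputable def dVal (u v : InfoStruct K) : ℝ :=
  ⨆ g : {g : K → ℕ → ℕ → ℝ // IsPayoff g}, |val u g.1 - val v g.1|

/-- The single-agent distance `d₁(u,v) = sup_{g ∈ 𝒢₁} |val(u,g) − val(v,g)|`. -/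
noncomputable def d1 (u v : InfoStruct K) : ℝ :=
  ⨆ g : {g : K → ℕ → ℕ → ℝ // IsPayoff1 g}, |val u g.1 - val v g.1|

/-- Marginal of an information structure on `K × ℕ` (state, player 1's signal). -/
noncomputable def marg1 (u : InfoStruct K) : PMF (K × ℕ) :=
  u.map (fun x => (x.1, x.2.1))

/-- Garbling of a single-agent information structure:
`(q.w)(k,c) = Σ_s w(k,s)·q(s)({c})`. -/
noncomputable def garble1 (q : Garbling) (w : PMF (K × ℕ)) : PMF (K × ℕ) :=
  w.bind (fun x => (q x.2).map (fun c => (x.1, c)))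

/-- Marginal of an information structure on the states. -/
noncomputable def margK (u : InfoStruct K) : PMF K := u.map Prod.fst

/-- Marginal of an information structure on `K × ℕ` (state, player 2's signal). -/
noncomputable def margKD (u : InfoStruct K) : PMF (K × ℕ) :=
  u.map (fun x => (x.1, x.2.2))

/-- `σ.q` : on signal `c`, draw `c'` according to `q(c)` and play `σ(c')`. -/
noncomputable def compGarble (σ q : Garbling) : Garbling :=
  fun c => (q c).bind σ

/-- `u ∈ 𝒰(L)` : both players' signals are `< L` with probability 1. -/
def InU (L : ℕ) (u : InfoStruct K) : Prop :=
  ∀ x : K × ℕ × ℕ, u x ≠ 0 → x.2.1 < L ∧ x.2.2 < L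

/-- `q ∈ 𝒬(L)` : garbling with values supported on `{0,…,L−1}`. -/
def GarblingIn (L : ℕ) (q : Garbling) : Prop :=
  ∀ n m, q n m ≠ 0 → m < L

/-- The two players' signals are conditionally independent given the state:
`u(k)·u(k,c,d) = u(k,c)·u(k,d)` for all `k, c, d`
(equivalently `u(c,d|k) = u(c|k)·u(d|k)` whenever `u(k) > 0`). -/
def CondIndep (u : InfoStruct K) : Prop :=
  ∀ (k : K) (c d : ℕ),
    (∑' y : ℕ × ℕ, u (k, y)) * u (k, c, d)
      = (∑' d' : ℕ, u (k, c, d')) * (∑' c' : ℕ, u (k, c', d))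

end ValueDistance

namespace ValueDistance

/-!
Garbling the signal of player 1 can only lower the value and garbling that of player 2 can only
raise it, and the value is `1`-Lipschitz for the total variation norm. This gives the inequality
`≤`, and it bounds the infimum by the `ℓ¹` distance between the convex sets of garblings `q.u` and
`v.q'`. If this distance is at least `r`, the Hahn-Banach theorem provides
`f : K × ℕ × ℕ → [-1, 1]` whose expectation under every `v.q'` exceeds that under every `q.u` by
`r`. Read as a game in which an action is a reported signal, `f` separates the values: player 1 is
truthful in `v` and player 2 is truthful in `u`, while the opponent's strategy acts as a garbling.
Turning `f` into an element of `𝒢` by truncating it at a large action bound changes these payoffs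
by an arbitrarily small amount only.
-/

section Expectation

variable {α β : Type*}

/-- The expectation of the real function `f` under the discrete distribution `p`. As for every real
`tsum`, it is `0` when the defining series does not converge absolutely. -/
noncomputable def expect (p : PMF α) (f : α → ℝ) : ℝ :=
  ∑' x, (p x).toReal * f x

lemma hasSum_toReal_coe (p : PMF α) : HasSum (fun x => (p x).toReal) 1 := by
  have hsum := ENNReal.hasSum_toReal p.tsum_coe_ne_top
  rwa [← ENNReal.tsum_toReal_eq p.apply_ne_top, p.tsum_coe, ENNReal.toReal_one] at hsum

lemma summable_mul_of_abs_le {w f : α → ℝ} {B : ℝ} (hw : Summable w) (hf : ∀ x, |f x| ≤ B) :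
    Summable fun x => w x * f x := by
  refine Summable.of_norm_bounded (hw.abs.mul_right B) fun x => ?_
  rw [Real.norm_eq_abs, abs_mul]
  exact mul_le_mul_of_nonneg_left (hf x) (abs_nonneg _)

lemma summable_toReal_coe_mul (p : PMF α) {f : α → ℝ} {B : ℝ} (hf : ∀ x, |f x| ≤ B) :
    Summable fun x => (p x).toReal * f x :=
  summable_mul_of_abs_le (hasSum_toReal_coe p).summable hf

lemma abs_expect_le (p : PMF α) {f : α → ℝ} {B : ℝ} (hf : ∀ x, |f x| ≤ B) :
    |expect p f| ≤ B := by
  have hsum : HasSum (fun x => (p x).toReal * B) B := by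
    simpa only [one_mul] using (hasSum_toReal_coe p).mul_right B
  rw [← Real.norm_eq_abs, expect]
  refine tsum_of_norm_bounded hsum fun x => ?_
  rw [norm_mul, Real.norm_of_nonneg ENNReal.toReal_nonneg]
  exact mul_le_mul_of_nonneg_left (hf x) ENNReal.toReal_nonneg

lemma expect_pure (a : α) (f : α → ℝ) : expect (PMF.pure a) f = f a := by
  classical
  rw [expect, tsum_eq_single a fun x hx => by simp [hx]]
  simp

lemma toReal_bind_apply (p : PMF α) (κ : α → PMF β) (y : β) :
    (p.bind κ y).toReal = expect p fun x => (κ x y).toReal := by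
  rw [PMF.bind_apply, ENNReal.tsum_toReal_eq fun x =>
    ENNReal.mul_ne_top (p.apply_ne_top x) ((κ x).apply_ne_top y)]
  simp only [expect, ENNReal.toReal_mul]

lemma summable_toReal_coe_mul_toReal_coe (p : PMF α) (κ : α → PMF β) :
    Summable fun z : α × β => (p z.1).toReal * (κ z.1 z.2).toReal := by
  have hnonneg (z : α × β) : 0 ≤ (p z.1).toReal * (κ z.1 z.2).toReal :=
    mul_nonneg ENNReal.toReal_nonneg ENNReal.toReal_nonneg
  have hfiber (x : α) : HasSum (fun y => (p x).toReal * (κ x y).toReal) (p x).toReal := by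
    simpa only [mul_one] using (hasSum_toReal_coe (κ x)).mul_left (p x).toReal
  refine (summable_prod_of_nonneg hnonneg).2 ⟨fun x => (hfiber x).summable, ?_⟩
  simpa only [(hfiber _).tsum_eq] using (hasSum_toReal_coe p).summable

lemma expect_bind (p : PMF α) (κ : α → PMF β) {f : β → ℝ} {B : ℝ} (hf : ∀ y, |f y| ≤ B) :
    expect (p.bind κ) f = expect p fun x => expect (κ x) f := by
  have hsum : Summable (Function.uncurry fun x y => (p x).toReal * (κ x y).toReal * f y) :=
    summable_mul_of_abs_le (summable_toReal_coe_mul_toReal_coe p κ) fun z => hf z.2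
  calc expect (p.bind κ) f
      = ∑' y, ∑' x, (p x).toReal * (κ x y).toReal * f y := by
        simp only [expect, toReal_bind_apply, tsum_mul_right]
    _ = ∑' x, ∑' y, (p x).toReal * (κ x y).toReal * f y := hsum.tsum_comm
    _ = expect p fun x => expect (κ x) f := by
        simp only [expect, mul_assoc, tsum_mul_left]

lemma expect_map (p : PMF α) (h : α → β) {f : β → ℝ} {B : ℝ} (hf : ∀ y, |f y| ≤ B) :
    expect (p.map h) f = expect p (f ∘ h) := by
  rw [← PMF.bind_pure_comp, expect_bind p _ hf]
  simp only [Function.comp_def, expect_pure]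

lemma expect_indicator_const (p : PMF α) (s : Set α) (c : ℝ) :
    expect p (s.indicator fun _ => c) = c * (p.toOuterMeasure s).toReal := by
  classical
  rw [PMF.toOuterMeasure_apply, ENNReal.tsum_toReal_eq fun x =>
    ne_top_of_le_ne_top (p.apply_ne_top x) (s.indicator_le_self _ x), ← tsum_mul_left]
  refine tsum_congr fun x => ?_
  by_cases hx : x ∈ s <;> simp [hx, mul_comm]

lemma expect_le_expect_add_of_le_off (p : PMF α) {f h : α → ℝ} {B : ℝ} (hf : ∀ x, |f x| ≤ B)
    (hh : ∀ x, |h x| ≤ B) (s : Set α) (hfh : ∀ x ∉ s, f x ≤ h x) :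
    expect p f ≤ expect p h + 2 * B * (p.toOuterMeasure s).toReal := by
  have hsum_f := summable_toReal_coe_mul p hf
  have hsum_h := summable_toReal_coe_mul p hh
  have hsum_s : Summable fun x => (p x).toReal * s.indicator (fun _ => 2 * B) x :=
    summable_toReal_coe_mul p fun x => by
      simpa only [Real.norm_eq_abs] using norm_indicator_le_norm_self (fun _ => 2 * B) x
  rw [← expect_indicator_const]
  unfold expect
  rw [← hsum_h.tsum_add hsum_s]
  refine hsum_f.tsum_le_tsum (fun x => ?_) (hsum_h.add hsum_s)
  rw [← mul_add]
  refine mul_le_mul_of_nonneg_left ?_ ENNReal.toReal_nonneg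
  by_cases hx : x ∈ s
  · rw [Set.indicator_of_mem hx]
    linarith [(abs_le.1 (hf x)).2, (abs_le.1 (hh x)).1]
  · simpa [hx] using hfh x hx

lemma tendsto_toOuterMeasure_atTop_zero {ι : Type*} [Preorder ι] [Nonempty ι]
    [(Filter.atTop : Filter ι).IsCountablyGenerated] (p : PMF α) {s : ι → Set α}
    (hs : Antitone s) (hempty : ⋂ i, s i = ∅) :
    Filter.Tendsto (fun i => (p.toOuterMeasure (s i)).toReal) Filter.atTop (nhds 0) := by
  let _ : MeasurableSpace α := ⊤
  have h := MeasureTheory.tendsto_measure_iInter_atTop (μ := p.toMeasure)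
    (fun _ => MeasurableSpace.measurableSet_top.nullMeasurableSet) hs
    ⟨Classical.arbitrary ι, MeasureTheory.measure_ne_top _ _⟩
  rw [hempty, MeasureTheory.measure_empty] at h
  simpa [Function.comp_def, PMF.toMeasure_apply_eq_toOuterMeasure] using
    (ENNReal.tendsto_toReal ENNReal.zero_ne_top).comp h

end Expectation

section TotalVariation

variable {α : Type}

lemma tv_nonneg (p q : PMF α) : 0 ≤ tv p q :=
  tsum_nonneg fun _ => abs_nonneg _

lemma expect_sub_expect_le_mul_tv (p q : PMF α) {f : α → ℝ} {B : ℝ} (hf : ∀ x, |f x| ≤ B) :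
    expect q f - expect p f ≤ B * tv p q := by
  have hsum := (summable_toReal_coe_mul q hf).sub (summable_toReal_coe_mul p hf)
  have hsum_tv := ((hasSum_toReal_coe p).sub (hasSum_toReal_coe q)).summable.abs.mul_left B
  unfold expect tv
  rw [← (summable_toReal_coe_mul q hf).tsum_sub (summable_toReal_coe_mul p hf), ← tsum_mul_left]
  refine hsum.tsum_le_tsum (fun x => ?_) hsum_tv
  calc (q x).toReal * f x - (p x).toReal * f x
      ≤ |f x * ((q x).toReal - (p x).toReal)| := by
        rw [← sub_mul, mul_comm]; exact le_abs_self _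
    _ ≤ B * |(p x).toReal - (q x).toReal| := by
        rw [abs_mul, abs_sub_comm]
        exact mul_le_mul_of_nonneg_right (hf x) (abs_nonneg _)

end TotalVariation

section Separation

variable {E : Type*} [NormedAddCommGroup E] [NormedSpace ℝ E]

lemma opNorm_le_div_of_forall_mem_ball_lt {f : StrongDual ℝ E} {r s : ℝ} (hr : 0 < r)
    (hf : ∀ x ∈ Metric.ball (0 : E) r, f x < s) : ‖f‖ ≤ s / r := by
  have smul_mem : ∀ x ∈ Metric.ball (0 : E) 1, r • x ∈ Metric.ball (0 : E) r := fun x hx => by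
    rw [mem_ball_zero_iff] at hx ⊢
    rw [norm_smul, Real.norm_of_nonneg hr.le]
    exact mul_lt_of_lt_one_right hr hx
  rw [← f.sSup_unit_ball_eq_norm]
  refine csSup_le ((Metric.nonempty_ball.2 one_pos).image _) ?_
  rintro _ ⟨x, hx, rfl⟩
  have h_pos := hf _ (smul_mem x hx)
  have h_neg := hf _ (smul_mem (-x) (by simpa using hx))
  rw [map_smul, smul_eq_mul] at h_pos h_neg
  rw [map_neg] at h_neg
  change ‖f x‖ ≤ s / r
  rw [Real.norm_eq_abs, abs_le, le_div_iff₀ hr, neg_le, le_div_iff₀ hr]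
  constructor <;> linarith

open Pointwise in
lemma exists_dual_forall_le_sub_of_le_dist {s t : Set E} (hs : Convex ℝ s) (ht : Convex ℝ t)
    {r : ℝ} (h : ∀ x ∈ s, ∀ y ∈ t, r ≤ dist x y) :
    ∃ f : StrongDual ℝ E, ‖f‖ ≤ 1 ∧ ∀ x ∈ s, ∀ y ∈ t, r ≤ f y - f x := by
  rcases le_or_gt r 0 with hr | hr
  · exact ⟨0, by simp, fun _ _ _ _ => by simpa using hr⟩
  have hdisj : Disjoint (Metric.ball (0 : E) r) (t - s) := by
    rw [Set.disjoint_right]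
    rintro _ ⟨y, hy, x, hx, rfl⟩
    rw [mem_ball_zero_iff, not_lt, ← dist_eq_norm, dist_comm]
    exact h x hx y hy
  obtain ⟨f, c, hball, hsub⟩ :=
    geometric_hahn_banach_open (convex_ball _ _) Metric.isOpen_ball (ht.sub hs) hdisj
  have hc : 0 < c := by simpa using hball 0 (Metric.mem_ball_self hr)
  refine ⟨(r / c) • f, ?_, fun x hx y hy => ?_⟩
  · calc ‖(r / c) • f‖ = r / c * ‖f‖ := by rw [norm_smul, Real.norm_of_nonneg (by positivity)]
      _ ≤ r / c * (c / r) := by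
        gcongr
        exact opNorm_le_div_of_forall_mem_ball_lt hr hball
      _ = 1 := by field_simp
  · calc r = r / c * c := by field_simp
      _ ≤ r / c * f (y - x) := by
        gcongr
        exact hsub _ (Set.sub_mem_sub hy hx)
      _ = ((r / c) • f) y - ((r / c) • f) x := by
        rw [map_sub, mul_sub]; rfl

end Separation

section Mixture

variable {α : Type*}

/-- The mass function of `p` as an element of `ℓ¹`. It makes the total variation distance a norm
distance, so that sets of distributions can be separated by the Hahn-Banach theorem. -/
noncomputable def toL1 (p : PMF α) : lp (fun _ : α => ℝ) 1 :=
  ⟨fun x => (p x).toReal, memℓp_gen (by simpa using (hasSum_toReal_coe p).summable)⟩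

lemma toL1_apply (p : PMF α) (x : α) : toL1 p x = (p x).toReal := rfl

lemma dist_toL1 {α : Type} (p q : PMF α) : dist (toL1 p) (toL1 q) = tv p q := by
  rw [dist_eq_norm, lp.norm_eq_tsum_rpow (by norm_num)]
  simp [tv, toL1_apply]

lemma dual_toL1 [DecidableEq α] (f : StrongDual ℝ (lp (fun _ : α => ℝ) 1)) (p : PMF α) :
    f (toL1 p) = expect p fun x => f (lp.single 1 x 1) := by
  have hsum := (lp.hasSum_single ENNReal.one_ne_top (toL1 p)).mapL f
  rw [← hsum.tsum_eq, expect]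
  refine tsum_congr fun x => ?_
  rw [← smul_eq_mul, ← map_smul, ← lp.single_smul, toL1_apply, smul_eq_mul, mul_one]

lemma toL1_bind {ι : Type*} [Fintype ι] (w : PMF ι) (P : ι → PMF α) :
    toL1 (w.bind P) = ∑ i, (w i).toReal • toL1 (P i) := by
  ext x
  rw [toL1_apply, toReal_bind_apply, expect, tsum_fintype]
  rw [lp.coeFn_sum, Finset.sum_apply]
  simp only [lp.coeFn_smul, Pi.smul_apply, smul_eq_mul, toL1_apply]

/-- Convexity for sets of distributions: a distribution drawn at random among two members of `S`
has its average in `S`. The average is written with `PMF.bind`, for `PMF` has no linear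
structure. -/
def IsMixtureClosed (S : Set (PMF α)) : Prop :=
  ∀ (w : PMF Bool) (P : Bool → PMF α), (∀ b, P b ∈ S) → w.bind P ∈ S

lemma IsMixtureClosed.convex_image_toL1 {S : Set (PMF α)} (hS : IsMixtureClosed S) :
    Convex ℝ (toL1 '' S) := by
  rintro _ ⟨p, hp, rfl⟩ _ ⟨q, hq, rfl⟩ a b ha hb hab
  let w : PMF Bool := PMF.ofFintype (fun i => ENNReal.ofReal (bif i then a else b)) (by
    rw [Fintype.sum_bool, cond_true, cond_false, ← ENNReal.ofReal_add ha hb, hab,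
      ENNReal.ofReal_one])
  refine ⟨w.bind fun i => bif i then p else q, hS w _ (Bool.rec hq hp), ?_⟩
  simp [toL1_bind, w, ha, hb]

lemma exists_forall_le_expect_sub_expect {α : Type} {S T : Set (PMF α)}
    (hS : IsMixtureClosed S) (hT : IsMixtureClosed T) {r : ℝ} (h : ∀ p ∈ S, ∀ q ∈ T, r ≤ tv p q) :
    ∃ f : α → ℝ, (∀ x, |f x| ≤ 1) ∧ ∀ p ∈ S, ∀ q ∈ T, r ≤ expect q f - expect p f := by
  classical
  obtain ⟨f, hf_norm, hf⟩ := exists_dual_forall_le_sub_of_le_dist hS.convex_image_toL1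
    hT.convex_image_toL1 (r := r) (by
      rintro _ ⟨p, hp, rfl⟩ _ ⟨q, hq, rfl⟩
      exact (h p hp q hq).trans_eq (dist_toL1 p q).symm)
  have abs_le_norm (x : α) : |f (lp.single 1 x (1 : ℝ))| ≤ ‖f‖ := by
    simpa [lp.norm_single one_pos] using f.le_opNorm (lp.single 1 x (1 : ℝ))
  refine ⟨fun x => f (lp.single 1 x (1 : ℝ)), fun x => (abs_le_norm x).trans hf_norm,
    fun p hp q hq => ?_⟩
  rw [← dual_toL1, ← dual_toL1]
  exact hf _ ⟨p, hp, rfl⟩ _ ⟨q, hq, rfl⟩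

end Mixture

variable {K : Type}

section Garbling

lemma garbleLeft_pure (u : InfoStruct K) : garbleLeft PMF.pure u = u := by
  simp [garbleLeft, PMF.pure_map]

lemma garbleRight_pure (u : InfoStruct K) : garbleRight u PMF.pure = u := by
  simp [garbleRight, PMF.pure_map]

lemma garbleLeft_garbleLeft (σ q : Garbling) (u : InfoStruct K) :
    garbleLeft σ (garbleLeft q u) = garbleLeft (compGarble σ q) u := by
  simp only [garbleLeft, compGarble, PMF.bind_bind, PMF.bind_map, PMF.map_bind, Function.comp_def]

lemma garbleRight_garbleRight (u : InfoStruct K) (q τ : Garbling) :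
    garbleRight (garbleRight u q) τ = garbleRight u (compGarble τ q) := by
  simp only [garbleRight, compGarble, PMF.bind_bind, PMF.bind_map, PMF.map_bind, Function.comp_def]

lemma garbleLeft_garbleRight (σ q : Garbling) (u : InfoStruct K) :
    garbleLeft σ (garbleRight u q) = garbleRight (garbleLeft σ u) q := by
  simp only [garbleLeft, garbleRight, PMF.bind_bind, PMF.bind_map, Function.comp_def]
  refine congrArg u.bind (funext fun x => ?_)
  simp only [← PMF.bind_pure_comp, Function.comp_def]
  exact PMF.bind_comm _ _ _

lemma garbleLeft_bind {ι : Type*} (w : PMF ι) (q : ι → Garbling) (u : InfoStruct K) :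
    garbleLeft (fun c => w.bind fun i => q i c) u = w.bind fun i => garbleLeft (q i) u := by
  simp only [garbleLeft, PMF.map_bind]
  exact PMF.bind_comm _ _ _

lemma garbleRight_bind {ι : Type*} (w : PMF ι) (q : ι → Garbling) (u : InfoStruct K) :
    garbleRight u (fun d => w.bind fun i => q i d) = w.bind fun i => garbleRight u (q i) := by
  simp only [garbleRight, PMF.map_bind]
  exact PMF.bind_comm _ _ _

lemma isMixtureClosed_range_garbleLeft (u : InfoStruct K) :
    IsMixtureClosed (Set.range fun q => garbleLeft q u) := fun w P hP => by
  choose q hq using hP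
  exact ⟨_, (garbleLeft_bind w q u).trans (congrArg w.bind (funext hq))⟩

lemma isMixtureClosed_range_garbleRight (u : InfoStruct K) :
    IsMixtureClosed (Set.range (garbleRight u)) := fun w P hP => by
  choose q hq using hP
  exact ⟨_, (garbleRight_bind w q u).trans (congrArg w.bind (funext hq))⟩

lemma marg1_garbleRight (u : InfoStruct K) (q : Garbling) :
    marg1 (garbleRight u q) = marg1 u := by
  simp only [marg1, garbleRight, ← PMF.bind_pure_comp, PMF.bind_bind, PMF.pure_bind, PMF.bind_const,
    Function.comp_def]

lemma margKD_garbleLeft (q : Garbling) (u : InfoStruct K) :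
    margKD (garbleLeft q u) = margKD u := by
  simp only [margKD, garbleLeft, ← PMF.bind_pure_comp, PMF.bind_bind, PMF.pure_bind, PMF.bind_const,
    Function.comp_def]

lemma expect_garbleLeft (q : Garbling) (u : InfoStruct K) {f : K × ℕ × ℕ → ℝ} {B : ℝ}
    (hf : ∀ x, |f x| ≤ B) :
    expect (garbleLeft q u) f = expect u fun x => expect (q x.2.1) fun c => f (x.1, c, x.2.2) := by
  rw [garbleLeft, expect_bind _ _ hf]
  simp only [expect_map _ _ hf, Function.comp_def]

lemma expect_garbleRight (u : InfoStruct K) (q : Garbling) {f : K × ℕ × ℕ → ℝ} {B : ℝ}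
    (hf : ∀ x, |f x| ≤ B) :
    expect (garbleRight u q) f =
      expect u fun x => expect (q x.2.2) fun d => f (x.1, x.2.1, d) := by
  rw [garbleRight, expect_bind _ _ hf]
  simp only [expect_map _ _ hf, Function.comp_def]

end Garbling

section Value

variable {g : K → ℕ → ℕ → ℝ} {B : ℝ}

lemma payoff_eq_expect_expect (u : InfoStruct K) (g : K → ℕ → ℕ → ℝ) (σ τ : Garbling) :
    payoff u g σ τ =
      expect u fun x => expect (σ x.2.1) fun i => expect (τ x.2.2) fun j => g x.1 i j := by
  simp only [payoff, expect, mul_assoc, tsum_mul_left]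

/-- The triple (state, action of player 1, action of player 2) is distributed as `u` with both
signals garbled, since strategies and garblings are the same maps. -/
lemma payoff_eq_expect_garble (u : InfoStruct K) (hg : ∀ k i j, |g k i j| ≤ B) (σ τ : Garbling) :
    payoff u g σ τ = expect (garbleRight (garbleLeft σ u) τ) fun x => g x.1 x.2.1 x.2.2 := by
  have hbdd : ∀ x : K × ℕ × ℕ, |g x.1 x.2.1 x.2.2| ≤ B := fun x => hg _ _ _
  rw [expect_garbleRight _ _ hbdd, expect_garbleLeft _ _ fun x => abs_expect_le _ fun j => hbdd _,
    payoff_eq_expect_expect]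

lemma payoff_garbleLeft (q : Garbling) (u : InfoStruct K) (hg : ∀ k i j, |g k i j| ≤ B)
    (σ τ : Garbling) : payoff (garbleLeft q u) g σ τ = payoff u g (compGarble σ q) τ := by
  simp only [payoff_eq_expect_garble _ hg, garbleLeft_garbleLeft]

lemma payoff_garbleRight (u : InfoStruct K) (q : Garbling) (hg : ∀ k i j, |g k i j| ≤ B)
    (σ τ : Garbling) : payoff (garbleRight u q) g σ τ = payoff u g σ (compGarble τ q) := by
  simp only [payoff_eq_expect_garble _ hg, garbleLeft_garbleRight, garbleRight_garbleRight]

lemma abs_payoff_le (u : InfoStruct K) (hg : ∀ k i j, |g k i j| ≤ B) (σ τ : Garbling) :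
    |payoff u g σ τ| ≤ B := by
  rw [payoff_eq_expect_garble u hg]
  exact abs_expect_le _ fun x => hg _ _ _

lemma payoff_sub_payoff_le_mul_tv (u v : InfoStruct K) (hg : ∀ k i j, |g k i j| ≤ B)
    (σ τ : Garbling) : payoff v g σ τ - payoff u g σ τ ≤ B * tv u v := by
  simp only [payoff_eq_expect_expect]
  exact expect_sub_expect_le_mul_tv u v fun x =>
    abs_expect_le _ fun i => abs_expect_le _ fun j => hg _ _ _

lemma bddBelow_range_payoff (u : InfoStruct K) (hg : ∀ k i j, |g k i j| ≤ B) (σ : Garbling) :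
    BddBelow (Set.range (payoff u g σ)) :=
  ⟨-B, Set.forall_mem_range.2 fun τ => (abs_le.1 (abs_payoff_le u hg σ τ)).1⟩

lemma iInf_payoff_le (u : InfoStruct K) (hg : ∀ k i j, |g k i j| ≤ B) (σ τ : Garbling) :
    ⨅ τ', payoff u g σ τ' ≤ payoff u g σ τ :=
  ciInf_le (bddBelow_range_payoff u hg σ) τ

lemma le_val (u : InfoStruct K) (hg : ∀ k i j, |g k i j| ≤ B) {c : ℝ} (σ : Garbling)
    (h : ∀ τ, c ≤ payoff u g σ τ) : c ≤ val u g := by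
  have hbdd : BddAbove (Set.range fun σ => ⨅ τ, payoff u g σ τ) :=
    ⟨B, Set.forall_mem_range.2 fun σ =>
      (iInf_payoff_le u hg σ PMF.pure).trans (abs_le.1 (abs_payoff_le u hg σ _)).2⟩
  exact (le_ciInf h).trans (le_ciSup hbdd σ)

lemma val_le (u : InfoStruct K) (hg : ∀ k i j, |g k i j| ≤ B) {c : ℝ} (τ : Garbling)
    (h : ∀ σ, payoff u g σ τ ≤ c) : val u g ≤ c :=
  ciSup_le fun σ => (iInf_payoff_le u hg σ τ).trans (h σ)

lemma val_sub_val_le_mul_tv (u v : InfoStruct K) (hg : ∀ k i j, |g k i j| ≤ B) :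
    val v g - val u g ≤ B * tv u v := by
  rw [sub_le_iff_le_add]
  refine ciSup_le fun σ => ?_
  rw [← sub_le_iff_le_add']
  refine le_val u hg σ fun τ => ?_
  linarith [iInf_payoff_le v hg σ τ, payoff_sub_payoff_le_mul_tv u v hg σ τ]

lemma val_garbleLeft_le (q : Garbling) (u : InfoStruct K) (hg : ∀ k i j, |g k i j| ≤ B) :
    val (garbleLeft q u) g ≤ val u g :=
  ciSup_le fun σ => le_val u hg (compGarble σ q) fun τ =>
    (iInf_payoff_le _ hg σ τ).trans_eq (payoff_garbleLeft q u hg σ τ)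

lemma val_le_val_garbleRight (u : InfoStruct K) (q : Garbling) (hg : ∀ k i j, |g k i j| ≤ B) :
    val u g ≤ val (garbleRight u q) g :=
  ciSup_le fun σ => le_val _ hg σ fun τ =>
    (iInf_payoff_le u hg σ (compGarble τ q)).trans_eq (payoff_garbleRight u q hg σ τ).symm

end Value

lemma IsPayoff.abs_le_one {g : K → ℕ → ℕ → ℝ} (hg : IsPayoff g) (k : K) (i j : ℕ) :
    |g k i j| ≤ 1 :=
  let ⟨_, hmem, _⟩ := hg
  abs_le.2 (hmem k i j)

section Truncation

/-- The payoff function with action bound `L` that agrees with `f` on the actions below `L`. -/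
noncomputable def truncate (L : ℕ) (f : K × ℕ × ℕ → ℝ) (k : K) (i j : ℕ) : ℝ :=
  if L ≤ i then -1 else if L ≤ j then 1 else f (k, i, j)

variable {f : K × ℕ × ℕ → ℝ}

lemma isPayoff_truncate (hf : ∀ x, |f x| ≤ 1) (L : ℕ) : IsPayoff (truncate L f) := by
  refine ⟨L, fun k i j => ?_, fun k i j hi => if_pos hi, fun k i j hi hj => ?_⟩
  · unfold truncate
    split_ifs
    · norm_num
    · norm_num
    · exact abs_le.1 (hf _)
  · rw [truncate, if_neg hi.not_ge, if_pos hj]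

lemma truncate_le_of_lt (hf : ∀ x, |f x| ≤ 1) {L j : ℕ} (hj : j < L) (k : K) (i : ℕ) :
    truncate L f k i j ≤ f (k, i, j) := by
  unfold truncate
  split_ifs with hi
  · exact (abs_le.1 (hf _)).1
  · omega
  · exact le_rfl

lemma le_truncate_of_lt (hf : ∀ x, |f x| ≤ 1) {L i : ℕ} (hi : i < L) (k : K) (j : ℕ) :
    f (k, i, j) ≤ truncate L f k i j := by
  unfold truncate
  split_ifs with hi' hj
  · omega
  · exact (abs_le.1 (hf _)).2
  · exact le_rfl

/-- Player 1 plays her signal; the truncation can only hurt her when that signal is at least `L`. -/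
lemma expect_garbleRight_le_payoff_truncate (hf : ∀ x, |f x| ≤ 1) (L : ℕ) (v : InfoStruct K)
    (τ : Garbling) :
    expect (garbleRight v τ) f ≤ payoff v (truncate L f) PMF.pure τ +
      2 * ((marg1 v).toOuterMeasure {y | L ≤ y.2}).toReal := by
  have hg := (isPayoff_truncate hf L).abs_le_one
  rw [payoff_eq_expect_garble v hg, garbleLeft_pure, ← marg1_garbleRight v τ, marg1,
    PMF.toOuterMeasure_map_apply]
  simpa only [mul_one, Set.preimage_ofPred_eq] using
    expect_le_expect_add_of_le_off _ hf (fun x => hg _ _ _) {x | L ≤ x.2.1}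
      fun x hx => le_truncate_of_lt hf (not_le.1 hx) _ _

lemma payoff_truncate_le_expect_garbleLeft (hf : ∀ x, |f x| ≤ 1) (L : ℕ) (u : InfoStruct K)
    (σ : Garbling) :
    payoff u (truncate L f) σ PMF.pure ≤ expect (garbleLeft σ u) f +
      2 * ((margKD u).toOuterMeasure {y | L ≤ y.2}).toReal := by
  have hg := (isPayoff_truncate hf L).abs_le_one
  rw [payoff_eq_expect_garble u hg, garbleRight_pure, ← margKD_garbleLeft σ u, margKD,
    PMF.toOuterMeasure_map_apply]
  simpa only [mul_one, Set.preimage_ofPred_eq] using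
    expect_le_expect_add_of_le_off _ (fun x => hg _ _ _) hf {x | L ≤ x.2.2}
      fun x hx => truncate_le_of_lt hf (not_le.1 hx) _ _

lemma tendsto_toOuterMeasure_setOf_le_snd {α : Type*} (p : PMF (α × ℕ)) :
    Filter.Tendsto (fun L => (p.toOuterMeasure {y | L ≤ y.2}).toReal) Filter.atTop (nhds 0) :=
  tendsto_toOuterMeasure_atTop_zero p (fun _ _ hLM _ hy => hLM.trans hy)
    (Set.eq_empty_of_forall_notMem fun y hy =>
      (Nat.lt_succ_self y.2).not_ge (Set.mem_iInter.1 hy (y.2 + 1)))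

lemma exists_isPayoff_sub_le_val_sub_val_of_forall_le_expect {u v : InfoStruct K} {r ε : ℝ}
    (hε : 0 < ε) (hf : ∀ x, |f x| ≤ 1)
    (hr : ∀ q q', r ≤ expect (garbleRight v q') f - expect (garbleLeft q u) f) :
    ∃ g : K → ℕ → ℕ → ℝ, IsPayoff g ∧ r - ε ≤ val v g - val u g := by
  have hε4 : 0 < ε / 4 := by positivity
  obtain ⟨L, hL_v, hL_u⟩ :=
    (((tendsto_toOuterMeasure_setOf_le_snd (marg1 v)).eventually_lt_const hε4).and
      ((tendsto_toOuterMeasure_setOf_le_snd (margKD u)).eventually_lt_const hε4)).exists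
  have hpay := isPayoff_truncate hf L
  refine ⟨truncate L f, hpay, ?_⟩
  rw [le_sub_iff_add_le]
  refine le_val v hpay.abs_le_one PMF.pure fun τ => ?_
  have hval_u : val u (truncate L f) ≤ expect (garbleRight v τ) f - r + ε / 2 :=
    val_le u hpay.abs_le_one PMF.pure fun σ => by
      linarith [payoff_truncate_le_expect_garbleLeft hf L u σ, hr σ τ]
  linarith [expect_garbleRight_le_payoff_truncate hf L v τ]

end Truncation

lemma exists_isPayoff_sub_le_val_sub_val_of_forall_le_tv {u v : InfoStruct K} {r ε : ℝ}
    (hε : 0 < ε) (hr : ∀ q q', r ≤ tv (garbleLeft q u) (garbleRight v q')) :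
    ∃ g : K → ℕ → ℕ → ℝ, IsPayoff g ∧ r - ε ≤ val v g - val u g := by
  obtain ⟨f, hf, hsep⟩ := exists_forall_le_expect_sub_expect (isMixtureClosed_range_garbleLeft u)
    (isMixtureClosed_range_garbleRight v) (by
      rintro _ ⟨q, rfl⟩ _ ⟨q', rfl⟩
      exact hr q q')
  exact exists_isPayoff_sub_le_val_sub_val_of_forall_le_expect hε hf
    fun q q' => hsep _ ⟨q, rfl⟩ _ ⟨q', rfl⟩

theorem sup_val_diff_eq_inf_comparison_general (u v : InfoStruct K) :
    (⨆ g : {g : K → ℕ → ℕ → ℝ // IsPayoff g}, (val v g.1 - val u g.1))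
      = sInf {r : ℝ | ∃ u' v' : InfoStruct K,
          (∀ g : K → ℕ → ℕ → ℝ, IsPayoff g → val u' g ≤ val u g) ∧
          (∀ g : K → ℕ → ℕ → ℝ, IsPayoff g → val v g ≤ val v' g) ∧
          r = tv u' v'} := by
  set S := {r : ℝ | ∃ u' v' : InfoStruct K, _}
  have hS_nonempty : S.Nonempty := ⟨_, u, v, fun _ _ => le_rfl, fun _ _ => le_rfl, rfl⟩
  have hS_bddBelow : BddBelow S := ⟨0, by rintro _ ⟨u', v', -, -, rfl⟩; exact tv_nonneg u' v'⟩
  have hS_upper : ∀ r ∈ S, ∀ g : {g : K → ℕ → ℕ → ℝ // IsPayoff g},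
      val v g.1 - val u g.1 ≤ r := by
    rintro _ ⟨u', v', hu', hv', rfl⟩ ⟨g, hg⟩
    linarith [hu' g hg, hv' g hg, val_sub_val_le_mul_tv u' v' hg.abs_le_one]
  have hnonempty : Nonempty {g : K → ℕ → ℕ → ℝ // IsPayoff g} :=
    ⟨⟨truncate 0 0, isPayoff_truncate (by simp) 0⟩⟩
  refine le_antisymm (ciSup_le fun g => le_csInf hS_nonempty fun r hr => hS_upper r hr g)
    (le_of_forall_sub_le fun ε hε => ?_)
  obtain ⟨g, hg, hle⟩ := exists_isPayoff_sub_le_val_sub_val_of_forall_le_tv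
    (u := u) (v := v) hε fun q q' => csInf_le hS_bddBelow
      ⟨_, _, fun g hg => val_garbleLeft_le q u hg.abs_le_one,
        fun g hg => val_le_val_garbleRight v q' hg.abs_le_one, rfl⟩
  have hbdd : BddAbove (Set.range fun g : {g : K → ℕ → ℕ → ℝ // IsPayoff g} =>
      val v g.1 - val u g.1) := ⟨_, Set.forall_mem_range.2 (hS_upper _ hS_nonempty.some_mem)⟩
  exact le_ciSup_of_le hbdd ⟨g, hg⟩ hle

/-- `sup_{g∈𝒢}(val(v,g) − val(u,g)) = inf{ ‖u' − v'‖ : u' ⪯ u, v' ⪰ v }`,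
where `w ⪰ w'` means `val(w,g) ≥ val(w',g)` for every `g ∈ 𝒢`. -/
theorem sup_val_diff_eq_inf_comparison (K : Type) [Fintype K]
    (hK : 2 ≤ Fintype.card K) (u v : InfoStruct K) :
    (⨆ g : {g : K → ℕ → ℕ → ℝ // IsPayoff g}, (val v g.1 - val u g.1))
      = sInf {r : ℝ | ∃ u' v' : InfoStruct K,
          (∀ g : K → ℕ → ℕ → ℝ, IsPayoff g → val u' g ≤ val u g) ∧
          (∀ g : K → ℕ → ℕ → ℝ, IsPayoff g → val v g ≤ val v' g) ∧
          r = tv u' v'} :=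
  sup_val_diff_eq_inf_comparison_general u v

end ValueDistance
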